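/- Let Φ̊ be a reduced irreducible root system of rank n ≥ 2 in V with a fixed base Δ = {α₁, …, α_n}, let k ≥ 1, and let Φ^re = {(α, r) : α ∈ Φ̊, r ∈ ℤᵏ} be the set of real roots of the untwisted toroidal affine reflection system. Then Ψ ⊆ Φ^re is a maximal closed subroot system with Gr(Ψ) = Φ̊ if and only if there exist a prime q, integers b₁, …, b_n with 0 ≤ bᵢ ≤ q − 1, and a k×k integer matrix U in Hermite normal form with det U = q, such that Ψ = {(α, b_α e_ℓ + m) : α ∈ Φ̊, m ∈ L_U}, where L_U ⊆ ℤᵏ is the subgroup generated by the rows u₁, …, u_k of U, ℓ is the unique index with u_ℓ = q·e_ℓ (e_ℓ the ℓ-th standard basis vector), and b_α = Σᵢ cᵢbᵢ whenever α = Σᵢ cᵢαᵢ with cᵢ ∈ ℤ. Moreover, the triple (q, (b₁, …, b_n), U) with these properties is uniquely determined by Ψ, so such Ψ are in one-to-one correspondence with triples consisting of a prime q, a tuple (bᵢ) ∈ {0, …, q−1}ⁿ, and a k×k Hermite normal form matrix U of determinant q. -/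

import Mathlib

open scoped RealInnerProductSpace Pointwise

noncomputable section

namespace BdS

variable {V Y : Type*} [NormedAddCommGroup V] [InnerProductSpace ℝ V]
variable [AddCommGroup Y] [Module ℝ Y]

/-- `pairing β α = (β, α∨) = 2(β,α)/(α,α)`. -/
def pairing (β α : V) : ℝ := 2 * ⟪β, α⟫ / ⟪α, α⟫

/-- `reflRoot α v = s_α(v) = v − (v, α∨)α`. -/
def reflRoot (α v : V) : V := v - pairing v α • α

/-- A (finite) root system in `V`. -/
def IsRootSystem (Φ : Set V) : Prop :=
  Φ.Finite ∧ (0 : V) ∉ Φ ∧ Submodule.span ℝ Φ = ⊤ ∧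
    (∀ α ∈ Φ, ∀ β ∈ Φ, reflRoot α β ∈ Φ) ∧
    ∀ α ∈ Φ, ∀ β ∈ Φ, ∃ m : ℤ, pairing β α = (m : ℝ)

def IsReduced (Φ : Set V) : Prop :=
  ∀ α ∈ Φ, ∀ c : ℝ, c • α ∈ Φ → c • α = α ∨ c • α = -α

def IsIrreducible (Φ : Set V) : Prop :=
  ∀ Φ₁ Φ₂ : Set V, Φ = Φ₁ ∪ Φ₂ → (∀ x ∈ Φ₁, ∀ y ∈ Φ₂, ⟪x, y⟫ = 0) →
    Φ₁ = ∅ ∨ Φ₂ = ∅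

/-- divisible roots -/
def divSet (Φ : Set V) : Set V := {α ∈ Φ | (2:ℝ)⁻¹ • α ∈ Φ}
/-- non-divisible roots -/
def ndSet (Φ : Set V) : Set V := Φ \ divSet Φ
/-- short roots: non-divisible roots of non-maximal squared length -/
def shortSet (Φ : Set V) : Set V := {α ∈ ndSet Φ | ∃ β ∈ ndSet Φ, ⟪α, α⟫ < ⟪β, β⟫}
/-- long roots -/
def longSet (Φ : Set V) : Set V := ndSet Φ \ shortSet Φ

/-- An extension datum of type `(Φ, Y)`. -/
def IsExtensionDatum (Φ : Set V) (Λ : V → Set Y) : Prop :=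
  (∀ α ∈ Φ, ∀ β ∈ Φ, ∀ z ∈ Λ α, ∀ y ∈ Λ β, y - pairing β α • z ∈ Λ (reflRoot α β)) ∧
  (0 : Y) ∈ Λ 0 ∧
  (∀ α ∈ ndSet Φ, (0 : Y) ∈ Λ α) ∧
  (∀ α ∈ divSet Φ, (Λ α).Nonempty) ∧
  Submodule.span ℝ (⋃ α ∈ insert (0 : V) Φ, Λ α) = ⊤

/-- subroot system of a finite root system -/
def IsSubRS (Φ Δ : Set V) : Prop :=
  Δ.Nonempty ∧ Δ ⊆ Φ ∧ ∀ α ∈ Δ, ∀ β ∈ Δ, reflRoot α β ∈ Δ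

def IsClosedSubRS (Φ Δ : Set V) : Prop :=
  IsSubRS Φ Δ ∧ ∀ α ∈ Δ, ∀ β ∈ Δ, α + β ∈ Φ → α + β ∈ Δ

def IsMaxClosedSubRS (Φ Δ : Set V) : Prop :=
  IsClosedSubRS Φ Δ ∧ Δ ≠ Φ ∧
    ∀ Δ' : Set V, IsClosedSubRS Φ Δ' → Δ' ≠ Φ → Δ ⊆ Δ' → Δ' = Δ

/-- semi-closed subroot system, relative to given short/long/divisible parts -/
def IsSemiClosedSubRS (Φ Φs Φl Φd Δ : Set V) : Prop :=
  IsSubRS Φ Δ ∧ ¬ (∀ α ∈ Δ, ∀ β ∈ Δ, α + β ∈ Φ → α + β ∈ Δ) ∧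
    ∀ α ∈ Δ, ∀ β ∈ Δ, α + β ∈ Φ → α + β ∉ Δ →
      (α ∈ Φs ∧ β ∈ Φs ∧ α + β ∈ Φl ∪ Φd) ∨ (α ∈ Φl ∧ β ∈ Φl ∧ α + β ∈ Φd)

def IsMaxSemiClosedSubRS (Φ Φs Φl Φd Δ : Set V) : Prop :=
  IsSemiClosedSubRS Φ Φs Φl Φd Δ ∧
    ∀ Δ' : Set V, IsClosedSubRS Φ Δ' → Δ' ≠ Φ → ¬ Δ ⊂ Δ'

/-- the set of real roots attached to an extension datum -/
def PhiRe (Φ : Set V) (Λ : V → Set Y) : Set (V × Y) := {x | x.1 ∈ Φ ∧ x.2 ∈ Λ x.1}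

/-- affine reflection `s_{α ⊕ y}(β ⊕ z) = s_α(β) ⊕ (z − (β,α∨)y)` -/
def reflAff (a x : V × Y) : V × Y := (reflRoot a.1 x.1, x.2 - pairing x.1 a.1 • a.2)

/-- subroot system of a set of real roots `R` -/
def IsSubSys (R Ψ : Set (V × Y)) : Prop :=
  Ψ.Nonempty ∧ Ψ ⊆ R ∧ Ψ ≠ R ∧ ∀ a ∈ Ψ, ∀ x ∈ Ψ, reflAff a x ∈ Ψ

def IsClosedSubSys (R Ψ : Set (V × Y)) : Prop :=
  IsSubSys R Ψ ∧ ∀ x ∈ Ψ, ∀ y ∈ Ψ, x + y ∈ R → x + y ∈ Ψ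

def IsMaxClosedSubSys (R Ψ : Set (V × Y)) : Prop :=
  IsClosedSubSys R Ψ ∧ ∀ Ψ' : Set (V × Y), IsClosedSubSys R Ψ' → Ψ ⊆ Ψ' → Ψ' = Ψ

/-- gradient of a subroot system -/
def Gr (Ψ : Set (V × Y)) : Set V := {α | ∃ y : Y, (α, y) ∈ Ψ}

def Zset (Ψ : Set (V × Y)) (α : V) : Set Y := {y | (α, y) ∈ Ψ}

abbrev E (n : ℕ) := EuclideanSpace ℝ (Fin n)

def eps {n : ℕ} (i : Fin n) : E n := EuclideanSpace.single i 1

def shortBC (n : ℕ) : Set (E n) := {v | ∃ i : Fin n, v = eps i ∨ v = -eps i}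

def longBC (n : ℕ) : Set (E n) :=
  {v | ∃ i j : Fin n, i ≠ j ∧ ∃ c d : ℝ, (c = 1 ∨ c = -1) ∧ (d = 1 ∨ d = -1) ∧
    v = c • eps i + d • eps j}

def divBC (n : ℕ) : Set (E n) :=
  {v | ∃ i : Fin n, v = (2:ℝ) • eps i ∨ v = -((2:ℝ) • eps i)}

def BCn (n : ℕ) : Set (E n) := shortBC n ∪ longBC n ∪ divBC n
def Bn (n : ℕ) : Set (E n) := shortBC n ∪ longBC n
def Cn (n : ℕ) : Set (E n) := longBC n ∪ divBC n

/-- a square integer matrix in Hermite normal form. -/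
def IsHNF {k : ℕ} (A : Matrix (Fin k) (Fin k) ℤ) : Prop :=
  (∀ i j : Fin k, j < i → A i j = 0) ∧ (∀ j : Fin k, 0 < A j j) ∧
    ∀ i j : Fin k, i < j → 0 ≤ A i j ∧ A i j < A j j

/-- `Ψ` is the maximal closed subroot system of the untwisted toroidal affine
reflection system attached to the triple `(q, (bᵢ), U)`:
`Ψ = {α ⊕ (b_α e_ℓ + L_U) : α ∈ Φ̊}` where `L_U` is the subgroup generated by
the rows of `U` and `ℓ` is the unique index with `u_ℓ = q·e_ℓ`. -/
def ToroidalRep {V : Type*} [NormedAddCommGroup V] [InnerProductSpace ℝ V]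
    {n k : ℕ} (Φ : Set V) (b : Fin n → V) (q : ℕ) (bv : Fin n → ℤ)
    (U : Matrix (Fin k) (Fin k) ℤ) (Ψ : Set (V × (Fin k → ℝ))) : Prop :=
  q.Prime ∧ (∀ i, 0 ≤ bv i ∧ bv i ≤ (q : ℤ) - 1) ∧ IsHNF U ∧ U.det = (q : ℤ) ∧
  ∃ l : Fin k, (U l = fun t => if t = l then (q : ℤ) else 0) ∧
    (∀ l' : Fin k, (U l' = fun t => if t = l' then (q : ℤ) else 0) → l' = l) ∧
    Ψ = {x | x.1 ∈ Φ ∧ ∃ c : Fin n → ℤ, x.1 = ∑ i, (c i : ℝ) • b i ∧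
      ∃ m ∈ AddSubgroup.closure (Set.range fun i => U i),
        x.2 = fun t => (((if t = l then ∑ i, c i * bv i else 0) + m t : ℤ) : ℝ)}

/-!
The fibres `Z α` of a closed subroot system with full gradient satisfy `-Z α ⊆ Z (-α)`, and
`Z α + Z β ⊆ Z (α + β)` whenever `α + β` is a root. Hence the difference sets `Z α - Z α` and
`Z β - Z β` agree when `α + β` is a root, and by irreducibility they all agree. Every root of an
irreducible system of rank at least two has a root that can be added to it, so the common
difference set is a subgroup `L` and each fibre is a coset of it. Every root is reached from the
simple roots by adding simple roots one at a time and negating, so a choice of points in the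
fibres over the simple roots extends to a linear `f` with `Z α = f α + L`. Such a system is maximal
exactly when `L` is a maximal subgroup of `ℤᵏ`, that is, the kernel of a surjection `φ` onto some
`ℤ/q` with `q` prime.

Let `l` be the last index with `φ e_l ≠ 0` and normalize `φ e_l = 1`. Then `L` is generated by
`q e_l` and the vectors `e_i - φ(e_i) e_l`; with the coefficients of `e_l` reduced modulo `q`, these
are the rows of a Hermite normal form matrix of determinant `q`. Conversely, a Hermite normal form
matrix of prime determinant is the identity outside one column. The multiples `a e_l` with
`0 ≤ a < q` represent the cosets of `L`, which normalizes `f` on the simple roots.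
-/

section RootSystem

variable {Φ : Set V} {α β : V}

theorem pairing_self (hα : α ≠ 0) : pairing α α = 2 :=
  mul_div_cancel_right₀ _ (inner_self_ne_zero.2 hα)

theorem pairing_mul_inner_self (hβ : β ≠ 0) : pairing α β * ⟪β, β⟫ = 2 * ⟪α, β⟫ :=
  div_mul_cancel₀ _ (inner_self_ne_zero.2 hβ)

namespace IsRootSystem

variable (hΦ : IsRootSystem Φ)
include hΦ

theorem ne_zero (hα : α ∈ Φ) : α ≠ 0 := fun h => hΦ.2.1 (h ▸ hα)

theorem reflRoot_mem (hα : α ∈ Φ) (hβ : β ∈ Φ) : reflRoot α β ∈ Φ := hΦ.2.2.2.1 α hα β hβ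

theorem neg_mem (hα : α ∈ Φ) : -α ∈ Φ := by
  have h := hΦ.reflRoot_mem hα hα
  rwa [reflRoot, pairing_self (hΦ.ne_zero hα), two_smul, sub_add_cancel_left] at h

theorem exists_pairing_eq_of_inner_pos (hα : α ∈ Φ) (hβ : β ∈ Φ) (hpos : 0 < ⟪α, β⟫) :
    ∃ m : ℤ, 0 < m ∧ pairing α β = m := by
  obtain ⟨m, hm⟩ := hΦ.2.2.2.2 β hβ α hα
  have h : 0 < pairing α β :=
    div_pos (by positivity) (real_inner_self_pos.2 (hΦ.ne_zero hβ))
  exact ⟨m, by exact_mod_cast hm ▸ h, hm⟩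

theorem sub_mem_of_inner_pos (hα : α ∈ Φ) (hβ : β ∈ Φ) (hne : α ≠ β) (hpos : 0 < ⟪α, β⟫) :
    α - β ∈ Φ := by
  obtain ⟨m, hm, hαβ⟩ := hΦ.exists_pairing_eq_of_inner_pos hα hβ hpos
  obtain ⟨m', hm', hβα⟩ :=
    hΦ.exists_pairing_eq_of_inner_pos hβ hα (by rwa [real_inner_comm])
  by_cases h1 : m = 1
  · simpa [reflRoot, hαβ, h1] using hΦ.reflRoot_mem hβ hα
  by_cases h1' : m' = 1
  · simpa [reflRoot, hβα, h1'] using hΦ.neg_mem (hΦ.reflRoot_mem hα hβ)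
  -- If both Cartan integers were at least `2`, then `‖α - β‖² ≤ 0`.
  have h2 : (2 : ℝ) ≤ m := by exact_mod_cast (by omega : 2 ≤ m)
  have h2' : (2 : ℝ) ≤ m' := by exact_mod_cast (by omega : 2 ≤ m')
  have hβ' := pairing_mul_inner_self (α := α) (hΦ.ne_zero hβ)
  have hα' := pairing_mul_inner_self (α := β) (hΦ.ne_zero hα)
  rw [hαβ] at hβ'
  rw [hβα, real_inner_comm α β] at hα'
  have hle : ⟪α - β, α - β⟫ ≤ 0 := by
    rw [real_inner_sub_sub_self]
    nlinarith [real_inner_self_nonneg (x := α), real_inner_self_nonneg (x := β)]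
  exact absurd (sub_eq_zero.1 (real_inner_self_nonpos.1 hle)) hne

theorem add_mem_of_inner_neg (hα : α ∈ Φ) (hβ : β ∈ Φ) (hne : α ≠ -β) (hneg : ⟪α, β⟫ < 0) :
    α + β ∈ Φ := by
  simpa using hΦ.sub_mem_of_inner_pos hα (hΦ.neg_mem hβ) hne (by simpa [inner_neg_right])

theorem add_mem_or_sub_mem (hα : α ∈ Φ) (hβ : β ∈ Φ) (hne : α ≠ β) (hne' : α ≠ -β)
    (h : ⟪α, β⟫ ≠ 0) : α + β ∈ Φ ∨ α - β ∈ Φ :=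
  h.lt_or_gt.imp (hΦ.add_mem_of_inner_neg hα hβ hne') (hΦ.sub_mem_of_inner_pos hα hβ hne)

end IsRootSystem

theorem IsIrreducible.forall_of_inner_ne_zero (hirr : IsIrreducible Φ) {P : V → Prop}
    (hα : α ∈ Φ) (hPα : P α)
    (hP : ∀ β ∈ Φ, ∀ γ ∈ Φ, ⟪β, γ⟫ ≠ 0 → P β → P γ) : ∀ β ∈ Φ, P β := by
  have horth : ∀ x ∈ Φ ∩ {x | P x}, ∀ y ∈ Φ \ {x | P x}, ⟪x, y⟫ = 0 :=
    fun x hx y hy => by_contra fun h => hy.2 (hP x hx.1 y hy.1 h hx.2)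
  rcases hirr _ _ (Set.inter_union_sdiff Φ {x | P x}).symm horth with h | h
  · exact absurd ⟨hα, hPα⟩ (Set.eq_empty_iff_forall_notMem.1 h α)
  · exact fun β hβ => by_contra fun hPβ => Set.eq_empty_iff_forall_notMem.1 h β ⟨hβ, hPβ⟩

end RootSystem

section Base

variable {Φ : Set V} {ι : Type*} [Fintype ι] {b : Module.Basis ι ℝ V}

/-- A base (system of simple roots) of the root system `Φ`, as an indexed basis of `V`. -/
structure IsBase (Φ : Set V) (b : Module.Basis ι ℝ V) : Prop where
  mem : ∀ i, b i ∈ Φ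
  pos_or_neg : ∀ α ∈ Φ, ∃ c : ι → ℤ,
    α = ∑ i, (c i : ℝ) • b i ∧ ((∀ i, 0 ≤ c i) ∨ ∀ i, c i ≤ 0)

theorem exists_pos_inner_pos_of_sum_ne_zero {v : ι → V} {c : ι → ℕ}
    (h : ∑ i, c i • v i ≠ 0) : ∃ i, 0 < c i ∧ 0 < ⟪∑ j, c j • v j, v i⟫ := by
  set α := ∑ i, c i • v i with hα
  have hsum : 0 < ∑ i, c i * ⟪α, v i⟫ := by
    calc 0 < ⟪α, α⟫ := real_inner_self_pos.2 h
      _ = ∑ i, c i * ⟪α, v i⟫ := by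
        conv_lhs => enter [3]; rw [hα]
        rw [inner_sum]
        simp only [← Nat.cast_smul_eq_nsmul ℝ, real_inner_smul_right]
  obtain ⟨i, hi⟩ : ∃ i, 0 < c i * ⟪α, v i⟫ := by
    contrapose! hsum
    exact Finset.sum_nonpos fun i _ => hsum i
  have hci : c i ≠ 0 := fun h0 => by simp [h0] at hi
  exact ⟨i, Nat.pos_of_ne_zero hci, (mul_pos_iff_of_pos_left (by positivity)).1 hi⟩

theorem IsRootSystem.induction_nat_combination (hΦ : IsRootSystem Φ) {v : ι → V}
    (hv : ∀ i, v i ∈ Φ) {P : V → Prop} (simple : ∀ i, P (v i))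
    (add : ∀ α ∈ Φ, ∀ i, α + v i ∈ Φ → P α → P (α + v i)) (c : ι → ℕ)
    (hc : ∑ i, c i • v i ∈ Φ) : P (∑ i, c i • v i) := by
  classical
  induction hN : ∑ i, c i generalizing c with
  | zero =>
    simp only [Finset.sum_eq_zero_iff, Finset.mem_univ, forall_const] at hN
    exact absurd (by simp [hN]) (hΦ.ne_zero hc)
  | succ N ih =>
    obtain ⟨i, hci, hi⟩ := exists_pos_inner_pos_of_sum_ne_zero (hΦ.ne_zero hc)
    by_cases heq : ∑ j, c j • v j = v i
    · exact heq ▸ simple i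
    obtain ⟨d, rfl⟩ : ∃ d, c = d + Pi.single i 1 :=
      le_iff_exists_add'.1 (update_le_iff.2 ⟨hci, fun _ _ => Nat.zero_le _⟩)
    have hd : ∑ j, (d + Pi.single i 1 : ι → ℕ) j • v j = ∑ j, d j • v j + v i := by
      simp [add_smul, Finset.sum_add_distrib, Pi.single_apply]
    have hdΦ := hΦ.sub_mem_of_inner_pos hc (hv i) heq hi
    rw [hd, add_sub_cancel_right] at hdΦ
    rw [hd] at hc ⊢
    refine add _ hdΦ i hc (ih d hdΦ ?_)
    simpa [Finset.sum_add_distrib] using hN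

namespace IsBase

theorem induction (hΦ : IsRootSystem Φ) (hb : IsBase Φ b) {P : V → Prop}
    (simple : ∀ i, P (b i)) (add : ∀ α ∈ Φ, ∀ i, α + b i ∈ Φ → P α → P (α + b i))
    (neg : ∀ α ∈ Φ, P α → P (-α)) : ∀ α ∈ Φ, P α := by
  intro α hα
  have hpos := hΦ.induction_nat_combination hb.mem simple add
  obtain ⟨c, rfl, hc | hc⟩ := hb.pos_or_neg α hα
  · lift c to ι → ℕ using hc
    simp only [Int.cast_natCast, Nat.cast_smul_eq_nsmul] at hα ⊢
    exact hpos c hα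
  · obtain ⟨d, rfl⟩ : ∃ d : ι → ℤ, c = -d := ⟨-c, (neg_neg c).symm⟩
    lift d to ι → ℕ using fun i => by simpa using hc i
    simp only [Pi.neg_apply, Int.cast_neg, neg_smul, Finset.sum_neg_distrib, Int.cast_natCast,
      Nat.cast_smul_eq_nsmul] at hα ⊢
    have hd := hΦ.neg_mem hα
    rw [neg_neg] at hd
    exact neg _ hd (hpos d hd)

theorem map_mem (hb : IsBase Φ b) {M : Type*} [AddCommGroup M] {f : V →+ M} {L : AddSubgroup M}
    (hf : ∀ i, f (b i) ∈ L) {α : V} (hα : α ∈ Φ) : f α ∈ L := by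
  obtain ⟨c, rfl, -⟩ := hb.pos_or_neg α hα
  simp only [Int.cast_smul_eq_zsmul, map_sum, map_zsmul]
  exact sum_mem fun i _ => zsmul_mem (hf i) _

theorem exists_add_mem [Nontrivial ι] (hΦ : IsRootSystem Φ) (hirr : IsIrreducible Φ)
    (hb : IsBase Φ b) {α : V} (hα : α ∈ Φ) : ∃ β ∈ Φ, α + β ∈ Φ := by
  by_contra! hadd
  have hpm : ∀ β ∈ Φ, β = α ∨ β = -α := by
    refine hirr.forall_of_inner_ne_zero hα (.inl rfl) fun β _ γ hγ hβγ hβ => ?_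
    have hαγ : ⟪α, γ⟫ ≠ 0 := by
      rcases hβ with rfl | rfl
      · exact hβγ
      · simpa [inner_neg_left] using hβγ
    by_contra! hne
    rcases hΦ.add_mem_or_sub_mem hα hγ hne.1.symm (fun h => hne.2 (by simp [h])) hαγ with h | h
    · exact hadd γ hγ h
    · exact hadd (-γ) (hΦ.neg_mem hγ) (by rwa [← sub_eq_add_neg])
  obtain ⟨i, j, hij⟩ := exists_pair_ne ι
  have hbij : b i = b j ∨ b i = -b j := by
    rcases hpm _ (hb.mem i) with hi | hi <;> rcases hpm _ (hb.mem j) with hj | hj <;>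
      simp [hi, hj]
  rcases hbij with h | h <;> simpa [hij.symm] using congrArg (b.coord i) h

end IsBase

end Base

section AdditiveFamily

variable {M : Type*} [AddCommGroup M]

/-- A family of nonempty subsets `Z α` of an abelian group, indexed by the roots `α ∈ Φ`, which is
compatible with negation and addition of roots. The fibres over `Φ` of a closed subroot system with
full gradient form such a family. -/
structure IsAdditiveFamily (Φ : Set V) (Z : V → Set M) : Prop where
  nonempty : ∀ α ∈ Φ, (Z α).Nonempty
  neg_mem : ∀ α ∈ Φ, ∀ x ∈ Z α, -x ∈ Z (-α)
  add_mem : ∀ α ∈ Φ, ∀ β ∈ Φ, α + β ∈ Φ → ∀ x ∈ Z α, ∀ y ∈ Z β, x + y ∈ Z (α + β)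

namespace IsAdditiveFamily

variable {Φ : Set V} {Z : V → Set M} {α β : V}

theorem apply_neg (hΦ : IsRootSystem Φ) (hZ : IsAdditiveFamily Φ Z) (hα : α ∈ Φ) :
    Z (-α) = -Z α := by
  ext x
  refine ⟨fun hx => ?_, fun hx => ?_⟩
  · simpa using hZ.neg_mem _ (hΦ.neg_mem hα) x hx
  · simpa using hZ.neg_mem α hα (-x) hx

theorem add_mem_of_mem_sub (hΦ : IsRootSystem Φ) (hZ : IsAdditiveFamily Φ Z) (hα : α ∈ Φ)
    (hβ : β ∈ Φ) (hαβ : α + β ∈ Φ) {x d : M} (hx : x ∈ Z α) (hd : d ∈ Z β - Z β) :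
    x + d ∈ Z α := by
  obtain ⟨y, hy, y', hy', rfl⟩ := hd
  have h := hZ.add_mem _ hαβ _ (hΦ.neg_mem hβ) (by simpa) _ (hZ.add_mem α hα β hβ hαβ x hx y hy) _
    (hZ.neg_mem β hβ y' hy')
  rwa [add_neg_cancel_right, ← sub_eq_add_neg, add_sub_assoc] at h

theorem sub_self_subset_of_add_mem (hΦ : IsRootSystem Φ) (hZ : IsAdditiveFamily Φ Z) (hα : α ∈ Φ)
    (hβ : β ∈ Φ) (hαβ : α + β ∈ Φ) : Z β - Z β ⊆ Z α - Z α := by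
  intro d hd
  obtain ⟨x, hx⟩ := hZ.nonempty α hα
  exact ⟨x + d, hZ.add_mem_of_mem_sub hΦ hα hβ hαβ hx hd, x, hx, add_sub_cancel_left x d⟩

theorem sub_self_eq_of_add_mem (hΦ : IsRootSystem Φ) (hZ : IsAdditiveFamily Φ Z) (hα : α ∈ Φ)
    (hβ : β ∈ Φ) (hαβ : α + β ∈ Φ) : Z α - Z α = Z β - Z β :=
  (hZ.sub_self_subset_of_add_mem hΦ hβ hα (by rwa [add_comm])).antisymm
    (hZ.sub_self_subset_of_add_mem hΦ hα hβ hαβ)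

theorem sub_self_eq (hΦ : IsRootSystem Φ) (hirr : IsIrreducible Φ) (hZ : IsAdditiveFamily Φ Z)
    (hα : α ∈ Φ) (hβ : β ∈ Φ) : Z β - Z β = Z α - Z α := by
  refine hirr.forall_of_inner_ne_zero (P := fun β => Z β - Z β = Z α - Z α) hα rfl
    (fun β hβ γ hγ hβγ h => ?_) β hβ
  have hneg : Z (-γ) - Z (-γ) = Z γ - Z γ := by rw [hZ.apply_neg hΦ hγ, neg_sub_neg]
  rw [← h]
  by_cases hne : β = γ
  · rw [hne]
  by_cases hne' : β = -γ
  · rw [hne', hneg]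
  rcases hΦ.add_mem_or_sub_mem hβ hγ hne hne' hβγ with hadd | hsub
  · exact (hZ.sub_self_eq_of_add_mem hΦ hβ hγ hadd).symm
  · rw [sub_eq_add_neg] at hsub
    rw [← hneg, hZ.sub_self_eq_of_add_mem hΦ hβ (hΦ.neg_mem hγ) hsub]

section Base

variable {ι : Type*} [Fintype ι] {b : Module.Basis ι ℝ V}

theorem exists_addSubgroup [Nontrivial ι] (hΦ : IsRootSystem Φ) (hirr : IsIrreducible Φ)
    (hb : IsBase Φ b) (hZ : IsAdditiveFamily Φ Z) :
    ∃ L : AddSubgroup M, ∀ α ∈ Φ, ∀ x ∈ Z α, ∀ y, y ∈ Z α ↔ y - x ∈ L := by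
  obtain ⟨i, -⟩ := exists_pair_ne ι
  have hadd : ∀ α ∈ Φ, ∀ x ∈ Z α, ∀ d ∈ Z (b i) - Z (b i), x + d ∈ Z α := by
    intro α hα x hx d hd
    obtain ⟨β, hβ, hαβ⟩ := hb.exists_add_mem hΦ hirr hα
    rw [← hZ.sub_self_eq hΦ hirr (hb.mem i) hβ] at hd
    exact hZ.add_mem_of_mem_sub hΦ hα hβ hαβ hx hd
  obtain ⟨z, hz⟩ := hZ.nonempty _ (hb.mem i)
  let L : AddSubgroup M :=
    { carrier := Z (b i) - Z (b i)
      zero_mem' := ⟨z, hz, z, hz, sub_self z⟩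
      add_mem' := by
        rintro _ e ⟨x, hx, y, hy, rfl⟩ he
        exact ⟨x + e, hadd _ (hb.mem i) x hx e he, y, hy, add_sub_right_comm x e y⟩
      neg_mem' := by
        rintro _ ⟨x, hx, y, hy, rfl⟩
        exact ⟨y, hy, x, hx, (neg_sub x y).symm⟩ }
  refine ⟨L, fun α hα x hx y => ⟨fun hy => ?_, fun hy => ?_⟩⟩
  · exact (hZ.sub_self_eq hΦ hirr (hb.mem i) hα).le ⟨y, hy, x, hx, rfl⟩
  · simpa using hadd α hα x hx _ hy

theorem map_mem (hΦ : IsRootSystem Φ) (hb : IsBase Φ b) (hZ : IsAdditiveFamily Φ Z) {f : V →+ M}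
    (hf : ∀ i, f (b i) ∈ Z (b i)) : ∀ α ∈ Φ, f α ∈ Z α := by
  refine hb.induction hΦ hf (fun α hα i hαi h => ?_) fun α hα h => ?_
  · exact map_add f α (b i) ▸ hZ.add_mem α hα _ (hb.mem i) hαi _ h _ (hf i)
  · exact map_neg f α ▸ hZ.neg_mem α hα _ h

end Base

end IsAdditiveFamily

end AdditiveFamily

section CosetSystem

/-- The union over `α ∈ Φ` of the cosets `f α + L`. -/
def cosetSystem (Φ : Set V) (f : V →ₗ[ℝ] Y) (L : AddSubgroup Y) : Set (V × Y) :=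
  {x | x.1 ∈ Φ ∧ x.2 - f x.1 ∈ L}

variable {Φ : Set V} {f f' : V →ₗ[ℝ] Y} {L L' Λ : AddSubgroup Y}

theorem phiRe_eq_cosetSystem : PhiRe Φ (fun _ => (Λ : Set Y)) = cosetSystem Φ 0 Λ := by
  ext x
  simp [PhiRe, cosetSystem]

theorem gr_cosetSystem : Gr (cosetSystem Φ f L) = Φ := by
  ext α
  exact ⟨fun ⟨_, h⟩ => h.1, fun h => ⟨f α, h, by simp⟩⟩

theorem reflAff_mem_cosetSystem (hΦ : IsRootSystem Φ) {a x : V × Y} (ha : a ∈ cosetSystem Φ f L)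
    (hx : x ∈ cosetSystem Φ f L) : reflAff a x ∈ cosetSystem Φ f L := by
  obtain ⟨m, hm⟩ := hΦ.2.2.2.2 _ ha.1 _ hx.1
  refine ⟨hΦ.reflRoot_mem ha.1 hx.1, ?_⟩
  have h : x.2 - f x.1 - m • (a.2 - f a.1) ∈ L := sub_mem hx.2 (zsmul_mem ha.2 m)
  convert h using 1
  simp only [reflAff, reflRoot, hm, map_sub, Int.cast_smul_eq_zsmul, map_zsmul, smul_sub]
  abel

theorem add_mem_cosetSystem {x y : V × Y} (hx : x ∈ cosetSystem Φ f L)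
    (hy : y ∈ cosetSystem Φ f L) (hxy : x.1 + y.1 ∈ Φ) : x + y ∈ cosetSystem Φ f L := by
  refine ⟨hxy, ?_⟩
  rw [Prod.fst_add, Prod.snd_add, map_add, add_sub_add_comm]
  exact add_mem hx.2 hy.2

theorem IsClosedSubSys.isAdditiveFamily_zset (hΦ : IsRootSystem Φ) {Ψ : Set (V × Y)}
    (hΨ : IsClosedSubSys (PhiRe Φ fun _ => (Λ : Set Y)) Ψ) (hGr : Gr Ψ = Φ) :
    IsAdditiveFamily Φ (Zset Ψ) where
  nonempty α hα := hGr.ge hα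
  neg_mem α hα x hx := by
    have h := hΨ.1.2.2.2 _ hx _ hx
    rw [reflAff, reflRoot, pairing_self (hΦ.ne_zero hα)] at h
    simpa [two_smul, Zset] using h
  add_mem α _ β _ hαβ x hx y hy :=
    hΨ.2 _ hx _ hy ⟨hαβ, add_mem (hΨ.1.2.1 hx).2 (hΨ.1.2.1 hy).2⟩

variable {ι : Type*} [Fintype ι] {b : Module.Basis ι ℝ V}

theorem cosetSystem_subset_iff [Nonempty ι] (hb : IsBase Φ b) :
    cosetSystem Φ f L ⊆ cosetSystem Φ f' L' ↔ L ≤ L' ∧ ∀ i, f (b i) - f' (b i) ∈ L' := by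
  constructor
  · intro h
    have hdiff : ∀ i, ∀ y ∈ L, f (b i) + y - f' (b i) ∈ L' := fun i y hy =>
      (h (show (b i, f (b i) + y) ∈ cosetSystem Φ f L from ⟨hb.mem i, by simpa⟩)).2
    have hb' : ∀ i, f (b i) - f' (b i) ∈ L' := fun i => by simpa using hdiff i 0 L.zero_mem
    refine ⟨fun y hy => ?_, hb'⟩
    obtain ⟨i⟩ := ‹Nonempty ι›
    rw [← add_mem_cancel_left (hb' i), sub_add_eq_add_sub]
    exact hdiff i y hy
  · rintro ⟨hL, hf⟩ x ⟨hx, hxL⟩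
    have h : (f - f').toAddMonoidHom x.1 ∈ L' := hb.map_mem (by simpa using hf) hx
    exact ⟨hx, by simpa using add_mem (hL hxL) h⟩

theorem cosetSystem_eq_iff [Nonempty ι] (hb : IsBase Φ b) :
    cosetSystem Φ f L = cosetSystem Φ f' L' ↔ L = L' ∧ ∀ i, f (b i) - f' (b i) ∈ L := by
  rw [Set.Subset.antisymm_iff, cosetSystem_subset_iff hb, cosetSystem_subset_iff hb]
  constructor
  · rintro ⟨⟨hle, h⟩, hge, -⟩
    obtain rfl := hle.antisymm hge
    exact ⟨rfl, h⟩
  · rintro ⟨rfl, h⟩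
    exact ⟨⟨le_rfl, h⟩, le_rfl, fun i => by simpa using neg_mem (h i)⟩

theorem isClosedSubSys_cosetSystem [Nonempty ι] (hΦ : IsRootSystem Φ) (hb : IsBase Φ b)
    (hL : L < Λ) (hf : ∀ i, f (b i) ∈ Λ) :
    IsClosedSubSys (PhiRe Φ fun _ => (Λ : Set Y)) (cosetSystem Φ f L) := by
  obtain ⟨i⟩ := ‹Nonempty ι›
  rw [phiRe_eq_cosetSystem]
  refine ⟨⟨⟨(b i, f (b i)), hb.mem i, by simp⟩, ?_, fun h => ?_, fun a ha x hx => ?_⟩,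
    fun x hx y hy hxy => add_mem_cosetSystem hx hy hxy.1⟩
  · exact (cosetSystem_subset_iff hb).2 ⟨hL.le, by simpa using hf⟩
  · exact hL.ne ((cosetSystem_eq_iff hb).1 h).1
  · exact reflAff_mem_cosetSystem hΦ ha hx

theorem isClosedSubSys_and_gr_eq_iff [Nontrivial ι] (hΦ : IsRootSystem Φ)
    (hirr : IsIrreducible Φ) (hb : IsBase Φ b) {Ψ : Set (V × Y)} :
    IsClosedSubSys (PhiRe Φ fun _ => (Λ : Set Y)) Ψ ∧ Gr Ψ = Φ ↔
      ∃ (f : V →ₗ[ℝ] Y) (L : AddSubgroup Y),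
        L < Λ ∧ (∀ i, f (b i) ∈ Λ) ∧ Ψ = cosetSystem Φ f L := by
  constructor
  · rintro ⟨hΨ, hGr⟩
    have hZ := hΨ.isAdditiveFamily_zset hΦ hGr
    choose z hz using fun i => hZ.nonempty _ (hb.mem i)
    obtain ⟨L, hL⟩ := hZ.exists_addSubgroup hΦ hirr hb
    have hfZ : ∀ α ∈ Φ, b.constr ℝ z α ∈ Zset Ψ α :=
      hZ.map_mem hΦ hb (f := (b.constr ℝ z).toAddMonoidHom) fun i =>
        (b.constr_basis ℝ z i).symm ▸ hz i
    have hzΛ : ∀ i, b.constr ℝ z (b i) ∈ Λ := fun i => (hΨ.1.2.1 (hfZ _ (hb.mem i))).2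
    have hΨeq : Ψ = cosetSystem Φ (b.constr ℝ z) L := by
      ext ⟨α, y⟩
      refine ⟨fun h => ?_, fun h => (hL α h.1 _ (hfZ α h.1) y).2 h.2⟩
      have hα : α ∈ Φ := (hΨ.1.2.1 h).1
      exact ⟨hα, (hL α hα _ (hfZ α hα) y).1 h⟩
    refine ⟨_, L, lt_of_le_of_ne ?_ ?_, hzΛ, hΨeq⟩
    · have hsub := hΨ.1.2.1
      rw [hΨeq, phiRe_eq_cosetSystem, cosetSystem_subset_iff hb] at hsub
      exact hsub.1
    · rintro rfl
      refine hΨ.1.2.2.1 (hΨeq.trans ?_)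
      rw [phiRe_eq_cosetSystem, cosetSystem_eq_iff hb]
      exact ⟨rfl, by simpa using hzΛ⟩
  · rintro ⟨f, L, hL, hf, rfl⟩
    exact ⟨isClosedSubSys_cosetSystem hΦ hb hL hf, gr_cosetSystem⟩

theorem isMaxClosedSubSys_and_gr_eq_iff [Nontrivial ι] (hΦ : IsRootSystem Φ)
    (hirr : IsIrreducible Φ) (hb : IsBase Φ b) {Ψ : Set (V × Y)} :
    IsMaxClosedSubSys (PhiRe Φ fun _ => (Λ : Set Y)) Ψ ∧ Gr Ψ = Φ ↔
      ∃ (f : V →ₗ[ℝ] Y) (L : AddSubgroup Y),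
        L ⋖ Λ ∧ (∀ i, f (b i) ∈ Λ) ∧ Ψ = cosetSystem Φ f L := by
  constructor
  · rintro ⟨⟨hΨ, hmax⟩, hGr⟩
    obtain ⟨f, L, hL, hf, rfl⟩ := (isClosedSubSys_and_gr_eq_iff hΦ hirr hb).1 ⟨hΨ, hGr⟩
    refine ⟨f, L, ⟨hL, fun N hLN hN => ?_⟩, hf, rfl⟩
    have heq := hmax _ (isClosedSubSys_cosetSystem hΦ hb hN hf)
      ((cosetSystem_subset_iff hb).2 ⟨hLN.le, by simp⟩)
    exact hLN.ne' ((cosetSystem_eq_iff hb).1 heq).1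
  · rintro ⟨f, L, hL, hf, rfl⟩
    refine ⟨⟨isClosedSubSys_cosetSystem hΦ hb hL.lt hf, fun Ψ' hΨ' hsub => ?_⟩, gr_cosetSystem⟩
    have hGr' : Gr Ψ' = Φ := by
      refine Set.Subset.antisymm (fun α ⟨y, hy⟩ => (hΨ'.1.2.1 hy).1) fun α hα => ?_
      obtain ⟨y, hy⟩ := (gr_cosetSystem (f := f) (L := L)).ge hα
      exact ⟨y, hsub hy⟩
    obtain ⟨f', L', hL', -, rfl⟩ := (isClosedSubSys_and_gr_eq_iff hΦ hirr hb).1 ⟨hΨ', hGr'⟩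
    obtain ⟨hle, hff'⟩ := (cosetSystem_subset_iff hb).1 hsub
    obtain rfl : L' = L := (hL.eq_or_eq hle hL'.le).resolve_right hL'.ne
    exact ((cosetSystem_eq_iff hb).2 ⟨rfl, hff'⟩).symm

end CosetSystem

section Coatom

variable {M N : Type*} [AddCommGroup M] [AddCommGroup N]

theorem isCoatom_iff_isSimpleAddGroup_quotient {L : AddSubgroup M} :
    IsCoatom L ↔ IsSimpleAddGroup (M ⧸ L) := by
  let e : AddSubgroup (M ⧸ L) ≃o Set.Ici L := QuotientAddGroup.comapMk'OrderIso L
  rw [← Set.isSimpleOrder_Ici_iff_isCoatom, ← e.isSimpleOrder_iff]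
  refine ⟨fun h => ?_, fun _ => inferInstance⟩
  have : Nontrivial (M ⧸ L) := AddSubgroup.nontrivial_iff.1 h.toNontrivial
  exact ⟨fun H _ => IsSimpleOrder.eq_bot_or_eq_top H⟩

theorem isCoatom_ker_of_surjective {q : ℕ} (hq : q.Prime) {φ : M →+ ZMod q}
    (hφ : Function.Surjective φ) : IsCoatom φ.ker := by
  have : Fact q.Prime := ⟨hq⟩
  exact isCoatom_iff_isSimpleAddGroup_quotient.2
    (QuotientAddGroup.quotientKerEquivOfSurjective φ hφ).isSimpleAddGroup

theorem exists_zmod_hom_ker_eq_of_isCoatom {L : AddSubgroup M} (hL : IsCoatom L) {v : M}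
    (hv : v ∉ L) : ∃ q : ℕ, q.Prime ∧ ∃ φ : M →+ ZMod q, φ v = 1 ∧ φ.ker = L := by
  have : IsSimpleAddGroup (M ⧸ L) := isCoatom_iff_isSimpleAddGroup_quotient.1 hL
  have hgen : ∀ x, x ∈ AddSubgroup.zmultiples (v : M ⧸ L) := by
    refine (AddSubgroup.eq_top_iff' _).1
      ((IsSimpleOrder.eq_bot_or_eq_top _).resolve_left fun h => ?_)
    exact hv ((QuotientAddGroup.eq_zero_iff v).1 (AddSubgroup.zmultiples_eq_bot.1 h))
  refine ⟨Nat.card (M ⧸ L), IsSimpleAddGroup.prime_card,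
    (zmodAddEquivOfGenerator hgen rfl).symm.toAddMonoidHom.comp (QuotientAddGroup.mk' L),
    zmodAddEquivOfGenerator_symm_apply_generator hgen rfl, ?_⟩
  ext x
  simp

theorem covBy_range_iff {j : M →+ N} (hj : Function.Injective j) {L : AddSubgroup N} :
    L ⋖ j.range ↔ ∃ L' : AddSubgroup M, IsCoatom L' ∧ L'.map j = L := by
  have hmap : ∀ L' : AddSubgroup M, L'.map j ⋖ j.range ↔ IsCoatom L' := by
    intro L'
    have hord : (Set.range (AddSubgroup.map j)).OrdConnected := by
      refine ⟨?_⟩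
      rintro _ ⟨A, rfl⟩ _ ⟨B, rfl⟩ K ⟨-, hK⟩
      exact ⟨K.comap j, AddSubgroup.map_comap_eq_self (hK.trans (AddSubgroup.map_le_range j B))⟩
    rw [AddMonoidHom.range_eq_map, ← covBy_top_iff]
    exact hord.apply_covBy_apply_iff
      (OrderEmbedding.ofMapLEIff (AddSubgroup.map j) fun _ _ =>
        AddSubgroup.map_le_map_iff_of_injective hj)
  constructor
  · intro h
    have hL := AddSubgroup.map_comap_eq_self h.le
    exact ⟨L.comap j, (hmap _).1 (by rwa [hL]), hL⟩
  · rintro ⟨L', hL', rfl⟩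
    exact (hmap L').2 hL'

end Coatom

section HermiteNormalForm

theorem exists_eq_mulSingle_of_prod_eq_prime {ι : Type*} [Fintype ι] [DecidableEq ι] {q : ℕ}
    (hq : q.Prime) {d : ι → ℕ} (h : ∏ i, d i = q) : ∃ l, d = Pi.mulSingle l q := by
  obtain ⟨l, -, hl⟩ : ∃ l ∈ Finset.univ, d l ≠ 1 :=
    Finset.exists_ne_one_of_prod_ne_one (h ▸ hq.ne_one)
  have hdl : d l = q :=
    (hq.eq_one_or_self_of_dvd _ (h ▸ Finset.dvd_prod_of_mem d (Finset.mem_univ l))).resolve_left hl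
  have hprod : ∏ i ∈ Finset.univ.erase l, d i = 1 := by
    rw [← Finset.mul_prod_erase _ _ (Finset.mem_univ l), hdl] at h
    exact Nat.eq_of_mul_eq_mul_left hq.pos (h.trans (mul_one q).symm)
  refine ⟨l, funext fun i => ?_⟩
  obtain rfl | hi := eq_or_ne i l
  · simpa
  · simpa [hi] using Finset.prod_eq_one_iff.1 hprod i (by simpa)

variable {k q q' : ℕ} {l l' : Fin k} {U U' : Matrix (Fin k) (Fin k) ℤ}

/-- The shape of a Hermite normal form matrix of prime determinant `q`: it differs from the
identity only in column `l`, which has the entry `q` on the diagonal. -/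
structure IsPivotHNF (q : ℕ) (l : Fin k) (U : Matrix (Fin k) (Fin k) ℤ) : Prop where
  pivot : U l l = q
  eq_one_apply : ∀ i j, j ≠ l → U i j = (1 : Matrix (Fin k) (Fin k) ℤ) i j
  eq_zero_of_lt : ∀ i, l < i → U i l = 0
  mem_Ico : ∀ i, i ≠ l → U i l ∈ Set.Ico 0 (q : ℤ)

theorem IsHNF.det_eq_prod_diag (hU : IsHNF U) : U.det = ∏ i, U i i :=
  Matrix.det_of_isUpperTriangular fun i j hij => hU.1 i j hij

theorem IsHNF.exists_isPivotHNF (hU : IsHNF U) (hq : q.Prime) (hdet : U.det = q) :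
    ∃ l, IsPivotHNF q l U := by
  obtain ⟨hlower, hpos, hupper⟩ := hU
  obtain ⟨l, hl⟩ := exists_eq_mulSingle_of_prod_eq_prime hq (d := fun i => (U i i).toNat) (by
    zify
    simpa [Int.toNat_of_nonneg (hpos _).le, IsHNF.det_eq_prod_diag ⟨hlower, hpos, hupper⟩]
      using hdet)
  have hdiag : ∀ i, U i i = (Pi.mulSingle l q : Fin k → ℕ) i := fun i => by
    rw [← hl, Int.toNat_of_nonneg (hpos i).le]
  have hpivot : U l l = q := by simpa using hdiag l
  have hone : ∀ i, i ≠ l → U i i = 1 := fun i hi => by simpa [hi] using hdiag i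
  refine ⟨l, hpivot, fun i j hj => ?_, fun i hi => hlower i l hi, fun i hi => ?_⟩
  · rcases lt_trichotomy i j with h | rfl | h
    · have := hupper i j h
      rw [Matrix.one_apply_ne h.ne]
      rw [hone j hj] at this
      omega
    · rw [Matrix.one_apply_eq, hone i hj]
    · rw [Matrix.one_apply_ne h.ne', hlower i j h]
  · rcases hi.lt_or_gt with h | h
    · exact hpivot ▸ hupper i l h
    · simp [hlower i l h, hq.pos]

namespace IsPivotHNF

theorem isHNF (hU : IsPivotHNF q l U) (hq : 0 < q) : IsHNF U := by
  refine ⟨fun i j hij => ?_, fun j => ?_, fun i j hij => ?_⟩ <;> obtain rfl | hj := eq_or_ne j l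
  · exact hU.eq_zero_of_lt i hij
  · rw [hU.eq_one_apply i j hj, Matrix.one_apply_ne hij.ne']
  · rw [hU.pivot]
    exact_mod_cast hq
  · simp [hU.eq_one_apply j j hj]
  · exact hU.pivot ▸ hU.mem_Ico i hij.ne
  · simp [hU.eq_one_apply _ j hj, Matrix.one_apply_ne hij.ne]

theorem det_eq (hU : IsPivotHNF q l U) (hq : 0 < q) : U.det = q := by
  rw [(hU.isHNF hq).det_eq_prod_diag, ← hU.pivot]
  exact Finset.prod_eq_single l (fun i _ hi => by simp [hU.eq_one_apply i i hi]) (by simp)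

theorem row_pivot (hU : IsPivotHNF q l U) : U l = Pi.single l (q : ℤ) := by
  ext j
  obtain rfl | hj := eq_or_ne j l
  · simpa using hU.pivot
  · rw [hU.eq_one_apply l j hj, Matrix.one_apply_ne hj.symm, Pi.single_eq_of_ne hj]

theorem row_of_ne (hU : IsPivotHNF q l U) {i : Fin k} (hi : i ≠ l) :
    U i = Pi.single i 1 + Pi.single l (U i l) := by
  ext j
  obtain rfl | hj := eq_or_ne j l
  · simp [hi.symm]
  · simp [hU.eq_one_apply i j hj, hj, Matrix.one_apply, Pi.single_apply, eq_comm]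

theorem row_eq_single_iff (hU : IsPivotHNF q l U) (hq : q ≠ 1) {i : Fin k} :
    U i = Pi.single i (q : ℤ) ↔ i = l := by
  refine ⟨fun h => ?_, fun h => h ▸ hU.row_pivot⟩
  by_contra hi
  have h1 := congrFun h i
  rw [hU.eq_one_apply i i hi, Matrix.one_apply_eq, Pi.single_eq_same] at h1
  exact hq (by exact_mod_cast h1.symm)

end IsPivotHNF

/-- The subgroup `L_U` of `ℤᵏ` generated by the rows of `U`. -/
def rowLattice (U : Matrix (Fin k) (Fin k) ℤ) : AddSubgroup (Fin k → ℤ) :=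
  AddSubgroup.closure (Set.range fun i => U i)

theorem row_mem_rowLattice (i : Fin k) : U i ∈ rowLattice U :=
  AddSubgroup.subset_closure ⟨i, rfl⟩

theorem rowLattice_le_iff {L : AddSubgroup (Fin k → ℤ)} : rowLattice U ≤ L ↔ ∀ i, U i ∈ L :=
  (AddSubgroup.closure_le L).trans Set.range_subset_iff

/-- The functional `x ↦ x l - ∑ i ≠ l, x i * U i l` modulo `q`; its kernel is `rowLattice U` when
`U` is a Hermite normal form with pivot `q` in column `l`. -/
def pivotHom (q : ℕ) (l : Fin k) (U : Matrix (Fin k) (Fin k) ℤ) : (Fin k → ℤ) →+ ZMod q :=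
  AddMonoidHom.mk' (fun x => ((x l - ∑ i ∈ Finset.univ.erase l, x i * U i l : ℤ) : ZMod q))
    fun x y => by
      simp only [Pi.add_apply, add_mul, Finset.sum_add_distrib, add_sub_add_comm, Int.cast_add]

theorem pivotHom_apply (x : Fin k → ℤ) :
    pivotHom q l U x = ((x l - ∑ i ∈ Finset.univ.erase l, x i * U i l : ℤ) : ZMod q) := rfl

@[simp]
theorem pivotHom_single_pivot (a : ℤ) : pivotHom q l U (Pi.single l a) = a := by
  rw [pivotHom_apply, Finset.sum_eq_zero fun i hi => ?_, sub_zero, Pi.single_eq_same]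
  rw [Pi.single_eq_of_ne (Finset.ne_of_mem_erase hi), zero_mul]

theorem pivotHom_single_of_ne {i : Fin k} (hi : i ≠ l) :
    pivotHom q l U (Pi.single i 1) = -U i l := by
  rw [pivotHom_apply, Finset.sum_eq_single_of_mem i (by simpa) fun j _ hj => ?_]
  · simp [hi.symm]
  · rw [Pi.single_eq_of_ne hj, zero_mul]

namespace IsPivotHNF

theorem mem_rowLattice_iff (hU : IsPivotHNF q l U) {x : Fin k → ℤ} :
    x ∈ rowLattice U ↔ pivotHom q l U x = 0 := by
  constructor
  · suffices rowLattice U ≤ (pivotHom q l U).ker from fun hx => this hx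
    refine rowLattice_le_iff.2 fun i => AddMonoidHom.mem_ker.2 ?_
    obtain rfl | hi := eq_or_ne i l
    · simp [hU.row_pivot]
    · rw [hU.row_of_ne hi, map_add, pivotHom_single_of_ne hi, pivotHom_single_pivot,
        neg_add_cancel]
  · intro hx
    rw [pivotHom_apply, ZMod.intCast_zmod_eq_zero_iff_dvd] at hx
    obtain ⟨t, ht⟩ := hx
    have hx : x = ∑ i ∈ Finset.univ.erase l, x i • U i + t • U l := by
      ext j
      obtain rfl | hj := eq_or_ne j l
      · simp only [Pi.add_apply, Finset.sum_apply, Pi.smul_apply, smul_eq_mul, hU.pivot]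
        linarith
      · simp [hU.eq_one_apply _ j hj, Matrix.one_apply, hj.symm]
    rw [hx]
    exact add_mem (sum_mem fun i _ => zsmul_mem (row_mem_rowLattice i) _)
      (zsmul_mem (row_mem_rowLattice l) t)

theorem isCoatom_rowLattice (hU : IsPivotHNF q l U) (hq : q.Prime) : IsCoatom (rowLattice U) := by
  have hker : rowLattice U = (pivotHom q l U).ker := by
    ext x
    exact hU.mem_rowLattice_iff
  rw [hker]
  refine isCoatom_ker_of_surjective hq fun a => ?_
  obtain ⟨a, rfl⟩ := ZMod.intCast_surjective a
  exact ⟨Pi.single l a, pivotHom_single_pivot a⟩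

theorem single_pivot_mem_rowLattice_iff (hU : IsPivotHNF q l U) {a : ℤ} :
    Pi.single l a ∈ rowLattice U ↔ (q : ℤ) ∣ a := by
  rw [hU.mem_rowLattice_iff, pivotHom_single_pivot, ZMod.intCast_zmod_eq_zero_iff_dvd]

theorem exists_sub_single_mem_rowLattice (hU : IsPivotHNF q l U) (hq : 0 < q) (x : Fin k → ℤ) :
    ∃ a ∈ Set.Ico 0 (q : ℤ), x - Pi.single l a ∈ rowLattice U := by
  have : NeZero q := ⟨hq.ne'⟩
  refine ⟨(pivotHom q l U x).val, ⟨by positivity, by exact_mod_cast ZMod.val_lt _⟩, ?_⟩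
  rw [hU.mem_rowLattice_iff, map_sub, pivotHom_single_pivot]
  simp

theorem isGreatest_pivot (hU : IsPivotHNF q l U) (hq : q ≠ 1) :
    IsGreatest {i | (Pi.single i 1 : Fin k → ℤ) ∉ rowLattice U} l := by
  refine ⟨fun h => hq ?_, fun i hi => ?_⟩
  · exact Nat.dvd_one.1 (by exact_mod_cast hU.single_pivot_mem_rowLattice_iff.1 h)
  · by_contra! hli
    refine hi (hU.mem_rowLattice_iff.2 ?_)
    rw [pivotHom_single_of_ne hli.ne', hU.eq_zero_of_lt i hli, Int.cast_zero, neg_zero]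

end IsPivotHNF

theorem eq_of_mem_Ico_of_dvd_sub {m a a' : ℤ} (ha : a ∈ Set.Ico 0 m) (ha' : a' ∈ Set.Ico 0 m)
    (h : m ∣ a - a') : a = a' :=
  sub_eq_zero.1 (Int.eq_zero_of_abs_lt_dvd h (abs_sub_lt_of_nonneg_of_lt ha.1 ha.2 ha'.1 ha'.2))

theorem IsPivotHNF.unique (hU : IsPivotHNF q l U) (hU' : IsPivotHNF q' l' U') (hq : q ≠ 1)
    (hq' : q' ≠ 1) (h : rowLattice U = rowLattice U') : q = q' ∧ l = l' ∧ U = U' := by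
  have hgreatest := hU'.isGreatest_pivot hq'
  rw [← h] at hgreatest
  obtain rfl := (hU.isGreatest_pivot hq).unique hgreatest
  have hdvd : ∀ a : ℤ, (q : ℤ) ∣ a ↔ (q' : ℤ) ∣ a := fun a => by
    rw [← hU.single_pivot_mem_rowLattice_iff, h, hU'.single_pivot_mem_rowLattice_iff]
  obtain rfl : q = q' := Nat.dvd_antisymm (by exact_mod_cast (hdvd q').2 dvd_rfl)
    (by exact_mod_cast (hdvd q).1 dvd_rfl)
  refine ⟨rfl, rfl, Matrix.ext fun i j => ?_⟩
  obtain rfl | hj := eq_or_ne j l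
  · obtain rfl | hi := eq_or_ne i j
    · rw [hU.pivot, hU'.pivot]
    have hrow : U i - U' i ∈ rowLattice U :=
      sub_mem (row_mem_rowLattice i) (h ▸ row_mem_rowLattice i)
    rw [hU.row_of_ne hi, hU'.row_of_ne hi, add_sub_add_left_eq_sub, ← Pi.single_sub,
      hU.single_pivot_mem_rowLattice_iff] at hrow
    exact eq_of_mem_Ico_of_dvd_sub (hU.mem_Ico i hi) (hU'.mem_Ico i hi) hrow
  · rw [hU.eq_one_apply i j hj, hU'.eq_one_apply i j hj]

theorem exists_single_one_notMem_of_ne_top {L : AddSubgroup (Fin k → ℤ)} (hL : L ≠ ⊤) :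
    ∃ i, Pi.single i 1 ∉ L := by
  contrapose! hL
  rw [AddSubgroup.eq_top_iff']
  intro x
  rw [pi_eq_sum_univ' x]
  exact sum_mem fun i _ => zsmul_mem (hL i) (x i)

theorem exists_isPivotHNF_of_apply_single_eq_zero [NeZero q] {φ : (Fin k → ℤ) →+ ZMod q}
    (hφ : ∀ i, l < i → φ (Pi.single i 1) = 0) :
    ∃ U, IsPivotHNF q l U ∧ ∀ i, i ≠ l → (U i l : ZMod q) = -φ (Pi.single i 1) := by
  let U : Matrix (Fin k) (Fin k) ℤ := Matrix.updateCol 1 l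
    (Function.update (fun i => ((-φ (Pi.single i 1)).val : ℤ)) l q)
  have hUl : ∀ i, i ≠ l → U i l = (-φ (Pi.single i 1)).val := fun i hi => by simp [U, hi]
  refine ⟨U, ⟨by simp [U], fun i j hj => Matrix.updateCol_ne hj, fun i hi => ?_, fun i hi => ?_⟩,
    fun i hi => by simp [hUl i hi]⟩
  · simp [hUl i hi.ne', hφ i hi]
  · rw [hUl i hi]
    exact ⟨by positivity, by exact_mod_cast ZMod.val_lt _⟩

theorem exists_isPivotHNF_of_isCoatom {L : AddSubgroup (Fin k → ℤ)} (hL : IsCoatom L) :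
    ∃ (q : ℕ) (l : Fin k) (U : Matrix (Fin k) (Fin k) ℤ),
      q.Prime ∧ IsPivotHNF q l U ∧ rowLattice U = L := by
  obtain ⟨l, hl, hmax⟩ := Set.exists_max_image {i | (Pi.single i 1 : Fin k → ℤ) ∉ L} id
    (Set.toFinite _) (exists_single_one_notMem_of_ne_top hL.ne_top)
  obtain ⟨q, hq, φ, hφl, rfl⟩ := exists_zmod_hom_ker_eq_of_isCoatom hL hl
  have : NeZero q := ⟨hq.ne_zero⟩
  have hφ_zero : ∀ i, l < i → φ (Pi.single i 1) = 0 := fun i hi =>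
    by_contra fun h => hi.not_ge (hmax i h)
  obtain ⟨U, hU, hUl⟩ := exists_isPivotHNF_of_apply_single_eq_zero hφ_zero
  have hφ : ∀ a : ℤ, φ (Pi.single l a) = a := fun a => by
    rw [← mul_one a, ← smul_eq_mul, Pi.single_smul, map_zsmul, hφl, zsmul_one, smul_eq_mul, mul_one]
  refine ⟨q, l, U, hq, hU, ?_⟩
  have hle : rowLattice U ≤ φ.ker := by
    refine rowLattice_le_iff.2 fun i => AddMonoidHom.mem_ker.2 ?_
    obtain rfl | hi := eq_or_ne i l
    · simp [hU.row_pivot, hφ]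
    · rw [hU.row_of_ne hi, map_add, hφ, hUl i hi, add_neg_cancel]
  exact (((hU.isCoatom_rowLattice hq).le_iff.1 hle).resolve_left hL.ne_top).symm

end HermiteNormalForm


section Toroidal

variable {n k q q' : ℕ} {Φ : Set V} {b : Module.Basis (Fin n) ℝ V} {bv bv' : Fin n → ℤ}
  {U U' : Matrix (Fin k) (Fin k) ℤ} {Ψ : Set (V × (Fin k → ℝ))}

/-- The coordinatewise inclusion of `ℤᵏ` into `ℝᵏ`. -/
def intVecCast (k : ℕ) : (Fin k → ℤ) →+ (Fin k → ℝ) := (Int.castAddHom ℝ).compLeft (Fin k)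

theorem intVecCast_apply (x : Fin k → ℤ) : intVecCast k x = fun t => (x t : ℝ) := rfl

theorem intVecCast_injective : Function.Injective (intVecCast k) :=
  Int.cast_injective.comp_left

theorem toroidalRealRoots_eq_phiRe {V : Type*} {Φ : Set V} :
    {x : V × (Fin k → ℝ) | x.1 ∈ Φ ∧ ∃ m : Fin k → ℤ, x.2 = fun t => (m t : ℝ)} =
      PhiRe Φ fun _ => ((intVecCast k).range : Set (Fin k → ℝ)) := by
  ext x
  simp only [PhiRe, Set.mem_ofPred_eq, SetLike.mem_coe, AddMonoidHom.mem_range, intVecCast_apply,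
    eq_comm]

/-- The linear map `α ↦ b_α e_l`, where `b_α` extends `bv` linearly from the base `b`. -/
def toroidalShift (b : Module.Basis (Fin n) ℝ V) (l : Fin k) (bv : Fin n → ℤ) :
    V →ₗ[ℝ] Fin k → ℝ :=
  b.constr ℝ fun i => intVecCast k (Pi.single l (bv i))

theorem toroidalShift_basis (l : Fin k) (i : Fin n) :
    toroidalShift b l bv (b i) = intVecCast k (Pi.single l (bv i)) :=
  b.constr_basis ℝ _ i

theorem toroidalShift_sum (l : Fin k) (c : Fin n → ℤ) :
    toroidalShift b l bv (∑ i, (c i : ℝ) • b i) =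
      intVecCast k (Pi.single l (∑ i, c i * bv i)) := by
  simp only [map_sum, map_smul, toroidalShift_basis]
  ext t
  simp [intVecCast_apply, Pi.single_apply]

theorem cosetSystem_toroidalShift_eq (hb : IsBase Φ b) (l : Fin k)
    (L : AddSubgroup (Fin k → ℤ)) :
    cosetSystem Φ (toroidalShift b l bv) (L.map (intVecCast k)) =
      {x | x.1 ∈ Φ ∧ ∃ c : Fin n → ℤ, x.1 = ∑ i, (c i : ℝ) • b i ∧ ∃ m ∈ L,
        x.2 = fun t => (((if t = l then ∑ i, c i * bv i else 0) + m t : ℤ) : ℝ)} := by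
  have hcoset : ∀ (c : Fin n → ℤ) (y : Fin k → ℝ),
      y - toroidalShift b l bv (∑ i, (c i : ℝ) • b i) ∈ L.map (intVecCast k) ↔ ∃ m ∈ L,
        y = fun t => (((if t = l then ∑ i, c i * bv i else 0) + m t : ℤ) : ℝ) := by
    intro c y
    simp only [AddSubgroup.mem_map, toroidalShift_sum, eq_sub_iff_add_eq', ← map_add]
    simp only [intVecCast_apply, Pi.add_apply, Pi.single_apply, eq_comm]
  ext ⟨α, y⟩
  refine and_congr_right fun hα => ⟨fun h => ?_, ?_⟩
  · obtain ⟨c, hc, -⟩ := hb.pos_or_neg α hα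
    exact ⟨c, hc, (hcoset c y).1 (hc ▸ h)⟩
  · rintro ⟨c, rfl, h⟩
    exact (hcoset c y).2 h

theorem toroidalRep_iff (hb : IsBase Φ b) : ToroidalRep Φ b q bv U Ψ ↔
    q.Prime ∧ (∀ i, bv i ∈ Set.Ico 0 (q : ℤ)) ∧ ∃ l, IsPivotHNF q l U ∧
      Ψ = cosetSystem Φ (toroidalShift b l bv) ((rowLattice U).map (intVecCast k)) := by
  have hsingle : ∀ l : Fin k,
      (fun t => if t = l then (q : ℤ) else 0) = Pi.single l (q : ℤ) := fun l => by
    ext t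
    rw [Pi.single_apply]
  simp only [ToroidalRep, hsingle, Int.le_sub_one_iff, Set.mem_Ico,
    cosetSystem_toroidalShift_eq hb, rowLattice]
  refine and_congr_right fun hq => and_congr_right fun _ => ⟨?_, ?_⟩
  · rintro ⟨hHNF, hdet, l, hl, -, hΨ⟩
    obtain ⟨l', hU⟩ := hHNF.exists_isPivotHNF hq hdet
    obtain rfl := (hU.row_eq_single_iff hq.ne_one).1 hl
    exact ⟨l, hU, hΨ⟩
  · rintro ⟨l, hU, hΨ⟩
    exact ⟨hU.isHNF hq.pos, hU.det_eq hq.pos, l, hU.row_pivot,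
      fun l' h => (hU.row_eq_single_iff hq.ne_one).1 h, hΨ⟩

theorem covBy_range_intVecCast_iff {L : AddSubgroup (Fin k → ℝ)} :
    L ⋖ (intVecCast k).range ↔ ∃ (q : ℕ) (l : Fin k) (U : Matrix (Fin k) (Fin k) ℤ),
      q.Prime ∧ IsPivotHNF q l U ∧ (rowLattice U).map (intVecCast k) = L := by
  rw [covBy_range_iff intVecCast_injective]
  constructor
  · rintro ⟨L, hL, rfl⟩
    obtain ⟨q, l, U, hq, hU, rfl⟩ := exists_isPivotHNF_of_isCoatom hL
    exact ⟨q, l, U, hq, hU, rfl⟩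
  · rintro ⟨q, l, U, hq, hU, rfl⟩
    exact ⟨rowLattice U, hU.isCoatom_rowLattice hq, rfl⟩

theorem ToroidalRep.unique [Nonempty (Fin n)] (hb : IsBase Φ b) (h : ToroidalRep Φ b q bv U Ψ)
    (h' : ToroidalRep Φ b q' bv' U' Ψ) : q = q' ∧ bv = bv' ∧ U = U' := by
  obtain ⟨hq, hbv, l, hU, rfl⟩ := (toroidalRep_iff hb).1 h
  obtain ⟨hq', hbv', l', hU', heq⟩ := (toroidalRep_iff hb).1 h'
  obtain ⟨hL, hsub⟩ := (cosetSystem_eq_iff hb).1 heq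
  obtain ⟨rfl, rfl, rfl⟩ := hU.unique hU' hq.ne_one hq'.ne_one
    (AddSubgroup.map_injective intVecCast_injective hL)
  refine ⟨rfl, funext fun i => eq_of_mem_Ico_of_dvd_sub (hbv i) (hbv' i) ?_, rfl⟩
  have hi := hsub i
  rwa [toroidalShift_basis, toroidalShift_basis, ← map_sub, ← Pi.single_sub,
    AddSubgroup.mem_map_iff_mem intVecCast_injective, hU.single_pivot_mem_rowLattice_iff] at hi

theorem exists_toroidalRep_cosetSystem [Nonempty (Fin n)] (hb : IsBase Φ b) {l : Fin k}
    (hq : q.Prime) (hU : IsPivotHNF q l U) {f : V →ₗ[ℝ] Fin k → ℝ}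
    (hf : ∀ i, f (b i) ∈ (intVecCast k).range) :
    ∃ bv, ToroidalRep Φ b q bv U (cosetSystem Φ f ((rowLattice U).map (intVecCast k))) := by
  choose z hz using hf
  choose bv hbv hsub using fun i => hU.exists_sub_single_mem_rowLattice hq.pos (z i)
  refine ⟨bv, (toroidalRep_iff hb).2 ⟨hq, hbv, l, hU, ?_⟩⟩
  refine (cosetSystem_eq_iff hb).2 ⟨rfl, fun i => ?_⟩
  rw [← hz, toroidalShift_basis, ← map_sub]
  exact AddSubgroup.mem_map_of_mem _ (hsub i)

theorem statement19_general (hn : 2 ≤ n) (hΦ : IsRootSystem Φ) (hirr : IsIrreducible Φ)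
    (hb : IsBase Φ b) :
    ((IsMaxClosedSubSys
        {x : V × (Fin k → ℝ) | x.1 ∈ Φ ∧ ∃ m : Fin k → ℤ, x.2 = fun t => (m t : ℝ)} Ψ ∧
        Gr Ψ = Φ) ↔
      ∃ (q : ℕ) (bv : Fin n → ℤ) (U : Matrix (Fin k) (Fin k) ℤ),
        ToroidalRep Φ b q bv U Ψ) ∧
    ∀ (q q' : ℕ) (bv bv' : Fin n → ℤ) (U U' : Matrix (Fin k) (Fin k) ℤ),
      ToroidalRep Φ b q bv U Ψ → ToroidalRep Φ b q' bv' U' Ψ →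
        q = q' ∧ bv = bv' ∧ U = U' := by
  have : Nontrivial (Fin n) := Fin.nontrivial_iff_two_le.2 hn
  refine ⟨?_, fun _ _ _ _ _ _ h h' => h.unique hb h'⟩
  rw [toroidalRealRoots_eq_phiRe, isMaxClosedSubSys_and_gr_eq_iff hΦ hirr hb]
  constructor
  · rintro ⟨f, L, hL, hf, rfl⟩
    obtain ⟨q, l, U, hq, hU, rfl⟩ := covBy_range_intVecCast_iff.1 hL
    obtain ⟨bv, h⟩ := exists_toroidalRep_cosetSystem hb hq hU hf
    exact ⟨q, bv, U, h⟩
  · rintro ⟨q, bv, U, h⟩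
    obtain ⟨hq, -, l, hU, hΨ⟩ := (toroidalRep_iff hb).1 h
    exact ⟨_, _, covBy_range_intVecCast_iff.2 ⟨q, l, U, hq, hU, rfl⟩,
      fun i => ⟨_, (toroidalShift_basis l i).symm⟩, hΨ⟩

end Toroidal

/-- Section 8: classification of the maximal closed subroot systems with full
gradient of the untwisted toroidal affine reflection system
`Φ^re = {(α, r) : α ∈ Φ̊, r ∈ ℤᵏ}`, together with the uniqueness of the
representing triple `(q, (bᵢ), U)`. -/
theorem statement19 {V : Type*} [NormedAddCommGroup V] [InnerProductSpace ℝ V]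
    [FiniteDimensional ℝ V]
    {n k : ℕ} (hn : 2 ≤ n) (hk : 1 ≤ k)
    (Φ : Set V) (hΦ : IsRootSystem Φ) (hred : IsReduced Φ) (hirr : IsIrreducible Φ)
    (b : Fin n → V) (hbΦ : ∀ i, b i ∈ Φ) (hbli : LinearIndependent ℝ b)
    (hbsp : Submodule.span ℝ (Set.range b) = ⊤)
    (hbase : ∀ α ∈ Φ, ∃ c : Fin n → ℤ,
      α = ∑ i, (c i : ℝ) • b i ∧ ((∀ i, 0 ≤ c i) ∨ (∀ i, c i ≤ 0)))
    (Ψ : Set (V × (Fin k → ℝ))) :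
    ((IsMaxClosedSubSys
        {x : V × (Fin k → ℝ) | x.1 ∈ Φ ∧ ∃ m : Fin k → ℤ, x.2 = fun t => (m t : ℝ)} Ψ ∧
        Gr Ψ = Φ) ↔
      ∃ (q : ℕ) (bv : Fin n → ℤ) (U : Matrix (Fin k) (Fin k) ℤ),
        ToroidalRep Φ b q bv U Ψ) ∧
    ∀ (q q' : ℕ) (bv bv' : Fin n → ℤ) (U U' : Matrix (Fin k) (Fin k) ℤ),
      ToroidalRep Φ b q bv U Ψ → ToroidalRep Φ b q' bv' U' Ψ →
        q = q' ∧ bv = bv' ∧ U = U' := by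
  have hb : IsBase Φ (Module.Basis.mk hbli hbsp.ge) := ⟨by simpa using hbΦ, by simpa using hbase⟩
  simpa only [Module.Basis.coe_mk] using statement19_general (k := k) (Ψ := Ψ) hn hΦ hirr hb

end BdS
end
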